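/- arXiv:1303.3345 — 2 statements merged into one kernel-verified Lean document; each statement's English description precedes it below -/
import Mathlib

section
/- Assume the base hypotheses. Suppose f ∈ RV₀(β) for some β > 1 and g ∈ RV_∞(-θ) for some θ > 0, that the unique continuous solution x of x'(t) = -f(x(t)) + g(t), x(0) = ξ > 0, satisfies x(t) → 0 as t → ∞, and that lim_{t→∞} g(t)/(f∘F⁻¹)(t) = L ∈ [0,∞]. Then: (i) if L = 0, lim_{t→∞} F(x(t))/t = 1; (ii) if L ∈ (0,∞), lim_{t→∞} F(x(t))/t = Λ*, where Λ* ∈ (0,1) is the unique solution of (1 - Λ*)·Λ*^{-β/(β-1)} = L; (iii) if L = ∞, lim_{t→∞} f(x(t))/g(t) = 1. -/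
open Filter Real Set Topology MeasureTheory

noncomputable section

/-- A function `f : (0,∞) → (0,∞)` is regularly varying at `0` with index `β` if
`f(λx)/f(x) → λ^β` as `x → 0⁺` for every `λ > 0`. -/
def RVat0 (f : ℝ → ℝ) (β : ℝ) : Prop :=
  ∀ lam : ℝ, 0 < lam →
    Tendsto (fun x => f (lam * x) / f x) (nhdsWithin 0 (Set.Ioi 0)) (nhds (lam ^ β))

/-- A function `h : (0,∞) → (0,∞)` is regularly varying at `∞` with index `α` if
`h(λt)/h(t) → λ^α` as `t → ∞` for every `λ > 0`. -/
def RVatInf (h : ℝ → ℝ) (α : ℝ) : Prop :=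
  ∀ lam : ℝ, 0 < lam →
    Tendsto (fun t => h (lam * t) / h t) atTop (nhds (lam ^ α))

/-- A continuous solution of the perturbed ODE `x'(t) = -f(x(t)) + g(t)`, `t > 0`,
with initial condition `x(0) = ξ`. -/
def IsSol (f g : ℝ → ℝ) (ξ : ℝ) (x : ℝ → ℝ) : Prop :=
  ContinuousOn x (Set.Ici 0) ∧ x 0 = ξ ∧
    ∀ t : ℝ, 0 < t → HasDerivAt x (-f (x t) + g t) t

theorem aux_local (h : ℝ → ℝ) (hc : Continuous h) (α : ℝ)
    (hl : ∀ s : ℝ, Tendsto (fun u => h (u + s) - h u) atTop (𝓝 (α * s)))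
    (ε : ℝ) (hε : 0 < ε) :
    ∃ δ > 0, ∃ U : ℝ, ∀ u ≥ U, ∀ r, 0 ≤ r → r ≤ δ → |h (u + r) - h u| ≤ ε := by
  let A : ℕ → Set ℝ := fun n => {s | ∀ u : ℝ, (n : ℝ) ≤ u → |h (u + s) - h u - α * s| ≤ ε / 4}
  have hA : ∀ n, IsClosed (A n) := by
    intro n
    have : A n = ⋂ u : ℝ, ⋂ _ : (n : ℝ) ≤ u, {s | |h (u + s) - h u - α * s| ≤ ε / 4} := by
      ext s; simp [A]
    rw [this]
    refine isClosed_iInter fun u => isClosed_iInter fun _ => ?_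
    exact isClosed_le (by fun_prop) continuous_const
  have hU : ⋃ n, A n = Set.univ := by
    ext s
    simp only [Set.mem_iUnion, Set.mem_univ, iff_true]
    have := (Metric.tendsto_atTop.1 (hl s)) (ε / 4) (by positivity)
    obtain ⟨N, hN⟩ := this
    obtain ⟨n, hn⟩ := exists_nat_ge N
    refine ⟨n, fun u hu => ?_⟩
    have := hN u (hn.trans hu)
    rw [Real.dist_eq] at this
    exact this.le
  obtain ⟨n, a, ha⟩ := nonempty_interior_of_iUnion_of_closed hA hU
  rw [mem_interior_iff_mem_nhds, Metric.mem_nhds_iff] at ha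
  obtain ⟨d, hd, hball⟩ := ha
  refine ⟨min (d / 2) (ε / (2 * (|α| + 1))), by positivity, n + a, fun u hu r hr0 hr => ?_⟩
  have hr1 : r ≤ d / 2 := hr.trans (min_le_left _ _)
  have hr2 : r ≤ ε / (2 * (|α| + 1)) := hr.trans (min_le_right _ _)
  have h1 : a + r ∈ A n := hball (by
    rw [Metric.mem_ball, Real.dist_eq]
    rw [abs_of_nonneg (by linarith)]; linarith)
  have h2 : a ∈ A n := hball (Metric.mem_ball_self hd)
  have e1 := h1 (u - a) (by linarith)
  have e2 := h2 (u - a) (by linarith)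
  rw [show u - a + (a + r) = u + r by ring] at e1
  rw [show u - a + a = u by ring] at e2
  have e3 : |α * r| ≤ ε / 2 := by
    rw [abs_mul, abs_of_nonneg hr0]
    have : r * (2 * (|α| + 1)) ≤ ε := by
      rwa [le_div_iff₀ (by positivity)] at hr2
    nlinarith [abs_nonneg α]
  rw [abs_le] at *
  constructor <;> nlinarith [e1.1, e1.2, e2.1, e2.2, e3.1, e3.2]

theorem aux_mono (h : ℝ → ℝ) (hc : Continuous h) (α : ℝ) (hα : α < 0)
    (hl : ∀ s : ℝ, Tendsto (fun u => h (u + s) - h u) atTop (𝓝 (α * s)))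
    (ε : ℝ) (hε : 0 < ε) :
    ∃ U : ℝ, ∀ u ≥ U, ∀ v ≥ u, h v ≤ h u + ε := by
  obtain ⟨δ, hδ, U, hU⟩ := aux_local h hc α hl ε hε
  have h1 : ∀ᶠ u in atTop, h (u + δ) - h u < 0 :=
    (hl δ).eventually_lt_const (mul_neg_of_neg_of_pos hα hδ)
  obtain ⟨V, hV⟩ := eventually_atTop.1 h1
  refine ⟨max U V, fun u hu v hv => ?_⟩
  have hu1 : U ≤ u := (le_max_left _ _).trans hu
  have hu2 : V ≤ u := (le_max_right _ _).trans hu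
  have key : ∀ k : ℕ, ∀ w ≥ u, h (w + k * δ) ≤ h w := by
    intro k
    induction k with
    | zero => intro w _; simp
    | succ k ih =>
      intro w hw
      have h2 := ih w hw
      have : (0:ℝ) ≤ k * δ := by positivity
      have h3 := hV (w + k * δ) (by linarith)
      rw [show w + ((k + 1 : ℕ) : ℝ) * δ = w + k * δ + δ by push_cast; ring]
      linarith
  have hk1 := Nat.floor_le (show 0 ≤ (v - u) / δ from div_nonneg (by linarith) hδ.le)
  have hk2 := Nat.lt_floor_add_one ((v - u) / δ)
  set k := ⌊(v - u) / δ⌋₊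
  rw [le_div_iff₀ hδ] at hk1
  rw [div_lt_iff₀ hδ] at hk2
  have h5 := key k (u + (v - u - k * δ)) (by linarith)
  have h6 := hU u hu1 (v - u - k * δ) (by linarith) (by linarith)
  rw [show u + (v - u - k * δ) + k * δ = v by ring] at h5
  rw [abs_le] at h6
  linarith [h6.2]

theorem aux_f (f : ℝ → ℝ) (hc : Continuous f) (hp : ∀ y, 0 < y → 0 < f y) (β : ℝ) (hβ : 0 < β)
    (hf : RVat0 f β) (η : ℝ) (hη : 1 < η) :
    ∃ z0 > 0, ∀ a b, 0 < a → a ≤ b → b ≤ z0 → f a ≤ η * f b := by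
  obtain ⟨U, hU⟩ := aux_mono (fun u => Real.log (f (Real.exp (-u))))
    (by
      refine Continuous.log (by fun_prop) fun u => (hp _ (Real.exp_pos _)).ne')
    (-β) (by linarith)
    (by
      intro s
      have h1 := hf (Real.exp (-s)) (Real.exp_pos _)
      have h2 : Tendsto (fun u : ℝ => Real.exp (-u)) atTop (𝓝[>] 0) :=
        tendsto_nhdsWithin_iff.2 ⟨Real.tendsto_exp_neg_atTop_nhds_zero,
          Eventually.of_forall fun u => Real.exp_pos _⟩
      have h3 := (h1.comp h2).log (by positivity)
      rw [Real.log_rpow (Real.exp_pos _), Real.log_exp] at h3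
      rw [show -β * s = β * -s by ring]
      refine h3.congr fun u => ?_
      simp only [Function.comp]
      rw [Real.log_div (hp _ (by positivity)).ne' (hp _ (by positivity)).ne', ← Real.exp_add,
        show -s + -u = -(u + s) by ring])
    (Real.log η) (Real.log_pos hη)
  refine ⟨Real.exp (-U), Real.exp_pos _, fun a b ha hab hb => ?_⟩
  have hb0 : 0 < b := ha.trans_le hab
  have h1 := hU (-Real.log b) (by
    have := Real.log_le_log hb0 hb
    rw [Real.log_exp] at this
    show U ≤ _
    linarith) (-Real.log a) (by
    have := Real.log_le_log ha hab
    show -Real.log b ≤ _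
    linarith)
  simp only [neg_neg, Real.exp_log ha, Real.exp_log hb0] at h1
  rw [← Real.log_mul (hp b hb0).ne' (by linarith)] at h1
  rw [mul_comm]
  exact (Real.log_le_log_iff (hp a ha) (mul_pos (hp b hb0) (by linarith))).1 h1

theorem aux_g (g : ℝ → ℝ) (hc : ContinuousOn g (Set.Ici 0)) (hp : ∀ y, 0 < y → 0 < g y) (α : ℝ)
    (hg : RVatInf g α) (η : ℝ) (hη : 1 < η) :
    ∃ ρ, 0 < ρ ∧ ρ < 1 ∧ ∃ T > 0, ∀ t ≥ T, ∀ s, ρ * t ≤ s → s ≤ t →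
      g s ≤ η * g t ∧ g t ≤ η * g s := by
  obtain ⟨δ, hδ, U, hU⟩ := aux_local (fun u => Real.log (g (Real.exp u)))
    (by
      refine Continuous.log ?_ fun u => (hp _ (Real.exp_pos _)).ne'
      exact hc.comp_continuous Real.continuous_exp (fun u => (Real.exp_pos u).le))
    α
    (by
      intro s
      have h1 := hg (Real.exp s) (Real.exp_pos _)
      have h3 := (h1.comp Real.tendsto_exp_atTop).log (by positivity)
      rw [Real.log_rpow (Real.exp_pos _), Real.log_exp] at h3
      refine h3.congr fun u => ?_
      simp only [Function.comp]
      rw [Real.log_div (hp _ (by positivity)).ne' (hp _ (by positivity)).ne', ← Real.exp_add,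
        show s + u = (u + s) by ring])
    (Real.log η) (Real.log_pos hη)
  refine ⟨Real.exp (-δ), Real.exp_pos _, by simpa using hδ, Real.exp (U + δ), Real.exp_pos _,
    fun t ht s hs hst => ?_⟩
  have ht0 : 0 < t := (Real.exp_pos _).trans_le ht
  have hs0 : 0 < s := lt_of_lt_of_le (by positivity) hs
  have l1 := Real.log_le_log (Real.exp_pos _) ht
  have l2 := Real.log_le_log (by positivity) hs
  have l3 := Real.log_le_log hs0 hst
  rw [Real.log_exp] at l1
  rw [Real.log_mul (Real.exp_pos _).ne' ht0.ne', Real.log_exp] at l2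
  have h1 := hU (Real.log s) (by show U ≤ _; linarith) (Real.log t - Real.log s) (by linarith)
    (by linarith)
  simp only [add_sub_cancel, Real.exp_log ht0, Real.exp_log hs0] at h1
  rw [abs_le] at h1
  constructor
  · refine (Real.log_le_log_iff (hp s hs0) (mul_pos (by linarith) (hp t ht0))).1 ?_
    rw [Real.log_mul (by linarith) (hp t ht0).ne']
    linarith [h1.1]
  · refine (Real.log_le_log_iff (hp t ht0) (mul_pos (by linarith) (hp s hs0))).1 ?_
    rw [Real.log_mul (by linarith) (hp s hs0).ne']
    linarith [h1.2]

theorem aux_Fderiv (f F : ℝ → ℝ) (hc : Continuous f) (hp : ∀ y, 0 < y → 0 < f y)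
    (hF : ∀ y : ℝ, 0 < y → F y = ∫ u in y..(1:ℝ), 1 / f u) (y : ℝ) (hy : 0 < y) :
    HasDerivAt F (-(1 / f y)) y := by
  have hcont : ContinuousOn (fun u => 1 / f u) (Set.Ioi 0) :=
    continuousOn_const.div hc.continuousOn fun u hu => (hp u hu).ne'
  have h1 : HasDerivAt (fun y => ∫ u in y..(1:ℝ), 1 / f u) (-(1 / f y)) y := by
    refine intervalIntegral.integral_hasDerivAt_left ?_ ?_ ?_
    · refine ContinuousOn.intervalIntegrable (hcont.mono fun u hu => ?_)
      have := hu.1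
      exact lt_of_lt_of_le (lt_min hy one_pos) this
    · exact hcont.stronglyMeasurableAtFilter isOpen_Ioi y hy
    · exact hcont.continuousAt (Ioi_mem_nhds hy)
  refine h1.congr_of_eventuallyEq ?_
  filter_upwards [Ioi_mem_nhds hy] with z hz using hF z hz

/-- bounded growth comparison: if μ/f(μx) ≤ c/f(x) near 0 then F(μx) ≤ c F(x) + C -/
theorem aux_Frv (f F : ℝ → ℝ) (hp : ∀ y, 0 < y → 0 < f y)
    (hD : ∀ y, 0 < y → HasDerivAt F (-(1 / f y)) y)
    (hF_top : Tendsto F (𝓝[>] 0) atTop) (β : ℝ) (hf : RVat0 f β) (μ : ℝ) (hμ : 0 < μ) :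
    Tendsto (fun x => F (μ * x) / F x) (𝓝[>] 0) (𝓝 (μ ^ (1 - β))) := by
  have hlim : Tendsto (fun x => μ * (f (μ * x) / f x)⁻¹) (𝓝[>] 0) (𝓝 (μ ^ (1 - β))) := by
    have := ((hf μ hμ).inv₀ (by positivity)).const_mul μ
    rwa [← Real.rpow_neg hμ.le, show μ * μ ^ (-β) = μ ^ (1 - β) by
      rw [sub_eq_add_neg, Real.rpow_add hμ, Real.rpow_one]] at this
  have hD2 : ∀ c y, 0 < y → HasDerivAt (fun x => F (μ * x) - c * F x)
      ((1 / f y) * (c - μ * (f (μ * y) / f y)⁻¹)) y := by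
    intro c y hy
    have h1 : HasDerivAt (fun x => F (μ * x)) (-(1 / f (μ * y)) * (μ * 1)) y :=
      HasDerivAt.comp y (hD (μ * y) (by positivity)) ((hasDerivAt_id y).const_mul μ)
    have h2 := h1.sub ((hD y hy).const_mul c)
    refine h2.congr_deriv ?_
    have e1 := (hp y hy).ne'
    have e2 := (hp (μ * y) (by positivity)).ne'
    rw [inv_div]
    generalize f (μ * y) = A at *
    generalize f y = B at *
    field_simp
    ring
  have hz : Tendsto (fun x => (F x)⁻¹) (𝓝[>] 0) (𝓝 0) := tendsto_inv_atTop_zero.comp hF_top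
  rw [tendsto_order]
  constructor
  · intro a ha
    obtain ⟨c, hac, hc⟩ := exists_between ha
    have h1 := hlim.eventually_const_lt hc
    obtain ⟨x0, hx0, hsub⟩ := mem_nhdsGT_iff_exists_Ioc_subset.1 h1
    have hx0' : (0:ℝ) < x0 := hx0
    have hanti : AntitoneOn (fun x => F (μ * x) - c * F x) (Set.Ioc 0 x0) := by
      refine antitoneOn_of_deriv_nonpos (convex_Ioc 0 x0) ?_ ?_ ?_
      · intro y hy; exact (hD2 c y hy.1).continuousAt.continuousWithinAt
      · intro y hy
        rw [interior_Ioc] at hy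
        exact (hD2 c y hy.1).differentiableAt.differentiableWithinAt
      · intro y hy
        rw [interior_Ioc] at hy
        rw [(hD2 c y hy.1).deriv]
        have := hsub ⟨hy.1, hy.2.le⟩
        have h3 := hp y hy.1
        simp only [Set.mem_ofPred_eq] at this
        exact mul_nonpos_of_nonneg_of_nonpos (by positivity) (by linarith)
    set C := F (μ * x0) - c * F x0
    have h2 : Tendsto (fun x => c + C * (F x)⁻¹) (𝓝[>] 0) (𝓝 (c + C * 0)) :=
      (hz.const_mul C).const_add c
    simp only [mul_zero, add_zero] at h2
    filter_upwards [h2.eventually_const_lt hac, Ioc_mem_nhdsGT hx0', hF_top.eventually_gt_atTop 0]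
      with x e1 e2 e3
    have e4 : C ≤ F (μ * x) - c * F x := hanti e2 ⟨hx0', le_rfl⟩ e2.2
    refine e1.trans_le ?_
    rw [le_div_iff₀ e3, add_mul, mul_assoc, inv_mul_cancel₀ e3.ne']
    linarith
  · intro a ha
    obtain ⟨c, hc, hac⟩ := exists_between ha
    have h1 := hlim.eventually_lt_const hc
    obtain ⟨x0, hx0, hsub⟩ := mem_nhdsGT_iff_exists_Ioc_subset.1 h1
    have hx0' : (0:ℝ) < x0 := hx0
    have hanti : MonotoneOn (fun x => F (μ * x) - c * F x) (Set.Ioc 0 x0) := by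
      refine monotoneOn_of_deriv_nonneg (convex_Ioc 0 x0) ?_ ?_ ?_
      · intro y hy; exact (hD2 c y hy.1).continuousAt.continuousWithinAt
      · intro y hy
        rw [interior_Ioc] at hy
        exact (hD2 c y hy.1).differentiableAt.differentiableWithinAt
      · intro y hy
        rw [interior_Ioc] at hy
        rw [(hD2 c y hy.1).deriv]
        have := hsub ⟨hy.1, hy.2.le⟩
        have h3 := hp y hy.1
        simp only [Set.mem_ofPred_eq] at this
        exact mul_nonneg (by positivity) (by linarith)
    set C := F (μ * x0) - c * F x0
    have h2 : Tendsto (fun x => c + C * (F x)⁻¹) (𝓝[>] 0) (𝓝 (c + C * 0)) :=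
      (hz.const_mul C).const_add c
    simp only [mul_zero, add_zero] at h2
    filter_upwards [h2.eventually_lt_const hac, Ioc_mem_nhdsGT hx0', hF_top.eventually_gt_atTop 0]
      with x e1 e2 e3
    have e4 : F (μ * x) - c * F x ≤ C := hanti e2 ⟨hx0', le_rfl⟩ e2.2
    refine lt_of_le_of_lt ?_ e1
    rw [div_le_iff₀ e3, add_mul, mul_assoc, inv_mul_cancel₀ e3.ne']
    linarith

theorem aux_barrier (v v' : ℝ → ℝ) (T c : ℝ) (hc : 0 < c)
    (hd : ∀ t ≥ T, HasDerivAt v (v' t) t) (hv : ∀ t ≥ T, 0 ≤ v t → v' t ≤ -c) :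
    ∀ᶠ t in atTop, v t ≤ 0 := by
  have h1 : ∃ t1 ≥ T, v t1 < 0 := by
    by_contra! hcon
    have key : ∀ t ≥ T, v t - v T ≤ -c * (t - T) := by
      intro t ht
      refine (convex_Ici T).image_sub_le_mul_sub_of_deriv_le ?_ ?_ ?_ T Set.self_mem_Ici t ht ht
      · intro s hs; exact (hd s hs).continuousAt.continuousWithinAt
      · intro s hs
        exact (hd s (interior_subset hs)).differentiableAt.differentiableWithinAt
      · intro s hs
        have hs := interior_subset hs
        rw [(hd s hs).deriv]
        exact hv s hs (hcon s hs)
    have h2 := key (T + (v T + 1) / c) (by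
      have := hcon T le_rfl
      have : 0 ≤ (v T + 1) / c := by positivity
      show T ≤ _
      linarith)
    have h3 := hcon (T + (v T + 1) / c) (by
      have := hcon T le_rfl
      have : 0 ≤ (v T + 1) / c := by positivity
      show T ≤ _
      linarith)
    have : c * ((v T + 1) / c) = v T + 1 := by field_simp
    rw [show -c * (T + (v T + 1) / c - T) = -(c * ((v T + 1) / c)) by ring, this] at h2
    linarith
  obtain ⟨t1, ht1, hneg⟩ := h1
  filter_upwards [eventually_ge_atTop t1] with t ht
  refine image_le_of_deriv_right_lt_deriv_boundary (f := v) (f' := v') (a := t1) (b := t)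
    (B := fun _ => 0) (B' := fun _ => 0) ?_ ?_ hneg.le (fun x => hasDerivAt_const x 0) ?_
    ⟨ht, le_rfl⟩
  · intro s hs; exact (hd s (ht1.trans hs.1)).continuousAt.continuousWithinAt
  · intro s hs; exact (hd s (ht1.trans hs.1)).hasDerivWithinAt
  · intro s hs h0
    have := hv s (ht1.trans hs.1) h0.ge
    linarith

theorem aux_left (v : ℝ → ℝ) (d a s : ℝ) (has : a < s) (hd : HasDerivAt v d s)
    (hmin : ∀ r ∈ Set.Icc a s, v s ≤ v r) : d ≤ 0 := by
  have h1 : HasDerivWithinAt v d (Set.Iio s) s := hd.hasDerivWithinAt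
  rw [hasDerivWithinAt_iff_tendsto_slope' (by simp)] at h1
  refine le_of_tendsto h1 ?_
  filter_upwards [Ico_mem_nhdsLT has] with r hr
  rw [slope_def_field]
  exact div_nonpos_of_nonneg_of_nonpos (by linarith [hmin r ⟨hr.1, hr.2.le⟩])
    (by linarith [hr.2])

theorem aux_pow (lam β : ℝ) (hl : 0 < lam) (hβ : 1 < β) :
    0 < lam ^ (-1 / (β - 1)) ∧ (lam ^ (-1 / (β - 1))) ^ (1 - β) = lam ∧
    (lam ^ (-1 / (β - 1))) ^ β = lam ^ (-β / (β - 1)) := by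
  have hb : β - 1 ≠ 0 := by linarith
  refine ⟨by positivity, ?_, ?_⟩
  · rw [← Real.rpow_mul hl.le, show -1 / (β - 1) * (1 - β) = 1 by field_simp; ring,
      Real.rpow_one]
  · rw [← Real.rpow_mul hl.le]
    congr 1
    ring

theorem aux_A (f F Finv : ℝ → ℝ) (hc : Continuous f) (hp : ∀ y, 0 < y → 0 < f y)
    (hD : ∀ y, 0 < y → HasDerivAt F (-(1 / f y)) y)
    (hF_top : Tendsto F (𝓝[>] 0) atTop)
    (hF_anti : StrictAntiOn F (Set.Ioi 0))
    (hFinv : ∀ t : ℝ, 0 ≤ t → 0 < Finv t ∧ F (Finv t) = t)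
    (hFinv_to0 : Tendsto Finv atTop (nhds 0)) (β : ℝ) (hβ : 1 < β) (hf : RVat0 f β)
    (lam : ℝ) (hl : 0 < lam) (C : ℝ) (hC : lam ^ (-β / (β - 1)) < C) :
    ∀ᶠ t in atTop, ∀ z, 0 < z → lam * t ≤ F z → f z ≤ C * f (Finv t) := by
  obtain ⟨hμ0, hμ1, hμ2⟩ := aux_pow lam β hl hβ
  set μ0 := lam ^ (-1 / (β - 1)) with hμdef
  rw [← hμ2] at hC
  have hcont : ContinuousAt (fun μ : ℝ => μ ^ β) μ0 :=
    Real.continuousAt_rpow_const μ0 β (Or.inl hμ0.ne')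
  have hev : ∀ᶠ μ in 𝓝[>] μ0, μ ^ β < C :=
    (hcont.tendsto.mono_left nhdsWithin_le_nhds).eventually_lt_const hC
  obtain ⟨μ, hμC, hμμ⟩ := (hev.and self_mem_nhdsWithin).exists
  have hμμ : μ0 < μ := hμμ
  have hμ : 0 < μ := hμ0.trans hμμ
  obtain ⟨C1, hC1, hC1C⟩ := exists_between hμC
  have hC1p : 0 < C1 := lt_trans (by positivity) hC1
  obtain ⟨z0, hz0, hmono⟩ := aux_f f hc hp β (by linarith) hf (C / C1)
    ((one_lt_div hC1p).2 hC1C)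
  have hFi : Tendsto Finv atTop (𝓝[>] 0) := tendsto_nhdsWithin_iff.2 ⟨hFinv_to0, by
    filter_upwards [eventually_ge_atTop 0] with t ht using (hFinv t ht).1⟩
  have h1 := ((hf μ hμ).comp hFi).eventually_lt_const hC1
  have hlt : μ ^ (1 - β) < lam := by
    rw [← hμ1]
    exact Real.rpow_lt_rpow_of_neg hμ0 hμμ (by linarith)
  have h2 := ((aux_Frv f F hp hD hF_top β hf μ hμ).comp hFi).eventually_lt_const hlt
  have h3 : Tendsto (fun t => μ * Finv t) atTop (𝓝 (μ * 0)) := hFinv_to0.const_mul μ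
  rw [mul_zero] at h3
  filter_upwards [h1, h2, h3.eventually_lt_const hz0, eventually_gt_atTop 0]
    with t e1 e2 e3 ht z hz hzt
  obtain ⟨hpos, hFF⟩ := hFinv t ht.le
  have hmp : 0 < μ * Finv t := by positivity
  simp only [Function.comp] at e1 e2
  rw [hFF, div_lt_iff₀ ht] at e2
  rw [div_lt_iff₀ (hp _ hpos)] at e1
  have hzz : z < μ * Finv t := (hF_anti.lt_iff_gt hmp hz).1 (e2.trans_le hzt)
  have := hmono z _ hz hzz.le e3.le
  have hCC : 0 < C / C1 := div_pos (hC1p.trans hC1C) hC1p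
  calc f z ≤ C / C1 * f (μ * Finv t) := this
    _ ≤ C / C1 * (C1 * f (Finv t)) := by gcongr
    _ = C * f (Finv t) := by field_simp

theorem aux_B (f F Finv : ℝ → ℝ) (hc : Continuous f) (hp : ∀ y, 0 < y → 0 < f y)
    (hD : ∀ y, 0 < y → HasDerivAt F (-(1 / f y)) y)
    (hF_top : Tendsto F (𝓝[>] 0) atTop)
    (hF_anti : StrictAntiOn F (Set.Ioi 0))
    (hFinv : ∀ t : ℝ, 0 ≤ t → 0 < Finv t ∧ F (Finv t) = t)
    (hFinv_to0 : Tendsto Finv atTop (nhds 0)) (β : ℝ) (hβ : 1 < β) (hf : RVat0 f β)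
    (lam : ℝ) (hl : 0 < lam) (C : ℝ) (hC0 : 0 < C) (hC : C < lam ^ (-β / (β - 1))) :
    ∃ z0 > 0, ∀ᶠ t in atTop, ∀ z, 0 < z → z ≤ z0 → F z ≤ lam * t → C * f (Finv t) ≤ f z := by
  obtain ⟨hμ0, hμ1, hμ2⟩ := aux_pow lam β hl hβ
  set μ0 := lam ^ (-1 / (β - 1)) with hμdef
  rw [← hμ2] at hC
  have hcont : ContinuousAt (fun μ : ℝ => μ ^ β) μ0 :=
    Real.continuousAt_rpow_const μ0 β (Or.inl hμ0.ne')
  have hev : ∀ᶠ μ in 𝓝[<] μ0, C < μ ^ β :=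
    (hcont.tendsto.mono_left nhdsWithin_le_nhds).eventually_const_lt hC
  obtain ⟨μ, hμC, hμ, hμμ⟩ := (hev.and (Ioo_mem_nhdsLT hμ0)).exists
  obtain ⟨C1, hC1C, hC1⟩ := exists_between hμC
  have hC1p : 0 < C1 := hC0.trans hC1C
  obtain ⟨z0, hz0, hmono⟩ := aux_f f hc hp β (by linarith) hf (C1 / C)
    ((one_lt_div hC0).2 hC1C)
  refine ⟨z0, hz0, ?_⟩
  have hFi : Tendsto Finv atTop (𝓝[>] 0) := tendsto_nhdsWithin_iff.2 ⟨hFinv_to0, by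
    filter_upwards [eventually_ge_atTop 0] with t ht using (hFinv t ht).1⟩
  have h1 := ((hf μ hμ).comp hFi).eventually_const_lt hC1
  have hlt : lam < μ ^ (1 - β) := by
    rw [← hμ1]
    exact Real.rpow_lt_rpow_of_neg hμ hμμ (by linarith)
  have h2 := ((aux_Frv f F hp hD hF_top β hf μ hμ).comp hFi).eventually_const_lt hlt
  filter_upwards [h1, h2, eventually_gt_atTop 0] with t e1 e2 ht z hz hzz0 hzt
  obtain ⟨hpos, hFF⟩ := hFinv t ht.le
  have hmp : 0 < μ * Finv t := by positivity
  simp only [Function.comp] at e1 e2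
  rw [hFF, lt_div_iff₀ ht] at e2
  rw [lt_div_iff₀ (hp _ hpos)] at e1
  have hzz : μ * Finv t < z := (hF_anti.lt_iff_gt hz hmp).1 (hzt.trans_lt e2)
  have := hmono _ z hmp hzz.le hzz0
  have h5 : C1 * f (Finv t) ≤ C1 / C * f z := e1.le.trans this
  have h6 : C / C1 * (C1 * f (Finv t)) ≤ C / C1 * (C1 / C * f z) := by gcongr
  calc C * f (Finv t) = C / C1 * (C1 * f (Finv t)) := by field_simp
    _ ≤ _ := h6
    _ = f z := by field_simp

theorem aux_pos (f g : ℝ → ℝ) (ξ : ℝ) (x : ℝ → ℝ) (hf_zero : f 0 = 0)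
    (hg_pos : ∀ t : ℝ, 0 < t → 0 < g t) (hξ : 0 < ξ) (hx : IsSol f g ξ x) :
    ∀ᶠ t in atTop, 0 < x t := by
  obtain ⟨hcx, hx0, hdx⟩ := hx
  have h1 : Tendsto x (𝓝[>] 0) (𝓝 ξ) := by
    have := (hcx 0 (by simp)).tendsto
    rw [hx0] at this
    exact this.mono_left (nhdsWithin_mono _ Set.Ioi_subset_Ici_self)
  obtain ⟨t0, hpos, ht0⟩ := ((h1.eventually_const_lt hξ).and self_mem_nhdsWithin).exists
  have ht0 : 0 < t0 := ht0
  have hnn : ∀ t ≥ t0, 0 ≤ x t := by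
    intro t ht
    have := image_le_of_deriv_right_lt_deriv_boundary (f := fun s => - x s)
      (f' := fun s => -(-f (x s) + g s)) (a := t0) (b := t)
      (B := fun _ => 0) (B' := fun _ => 0) ?_ ?_ (by simpa using hpos.le)
      (fun x => hasDerivAt_const x 0) ?_ ⟨ht, le_rfl⟩
    · simpa using this
    · intro s hs
      exact (hdx s (ht0.trans_le hs.1)).neg.continuousAt.continuousWithinAt
    · intro s hs; exact (hdx s (ht0.trans_le hs.1)).neg.hasDerivWithinAt
    · intro s hs h0
      have h0 : x s = 0 := by simpa using h0
      have := hg_pos s (ht0.trans_le hs.1)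
      simp only [h0, hf_zero]
      linarith
  filter_upwards [eventually_gt_atTop t0] with t ht
  refine lt_of_le_of_ne (hnn t ht.le) fun h0 => ?_
  have hmin : IsLocalMin x t := by
    filter_upwards [Ioi_mem_nhds ht] with s hs
    rw [← h0]; exact hnn s (le_of_lt hs)
  have h2 := hmin.hasDerivAt_eq_zero (hdx t (ht0.trans ht))
  rw [← h0, hf_zero] at h2
  have := hg_pos t (ht0.trans ht)
  linarith

theorem aux_root (L γ : ℝ) (hL : 0 < L) (hγ : 0 < γ) :
    ∃ Λ : ℝ, Λ ∈ Set.Ioo (0:ℝ) 1 ∧ 1 - Λ = L * Λ ^ γ ∧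
      ∀ Λ' ∈ Set.Ioo (0:ℝ) 1, 1 - Λ' = L * Λ' ^ γ → Λ' = Λ := by
  have hcont : ContinuousOn (fun s : ℝ => 1 - s - L * s ^ γ) (Set.Icc 0 1) := by
    have : Continuous (fun s : ℝ => s ^ γ) := Real.continuous_rpow_const hγ.le
    fun_prop
  have := intermediate_value_Ioo' (zero_le_one) hcont
  have h0 : (0:ℝ) ∈ Set.Ioo ((fun s : ℝ => 1 - s - L * s ^ γ) 1)
      ((fun s : ℝ => 1 - s - L * s ^ γ) 0) := by
    simp only [Real.one_rpow, Real.zero_rpow hγ.ne']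
    constructor <;> linarith
  obtain ⟨Λ, hΛ, h1⟩ := this h0
  simp only at h1
  refine ⟨Λ, hΛ, by linarith, fun Λ' hΛ' h2 => ?_⟩
  rcases lt_trichotomy Λ' Λ with h | h | h
  · have := Real.rpow_lt_rpow hΛ'.1.le h hγ
    nlinarith
  · exact h
  · have := Real.rpow_lt_rpow hΛ.1.le h hγ
    nlinarith

/-- Theorem 2.7 (Theorem `overall`): under the base hypotheses, with `f ∈ RV₀(β)` for
some `β > 1` and `g ∈ RV_∞(-θ)` for some `θ > 0`, assume the solution `x` of
`x' = -f(x) + g`, `x(0) = ξ > 0`, satisfies `x(t) → 0`.  If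
`g(t)/(f∘F⁻¹)(t) → L ∈ [0,∞]` then: (i) if `L = 0`, `F(x(t))/t → 1`;
(ii) if `L ∈ (0,∞)`, `F(x(t))/t → Λ*`, where `Λ* ∈ (0,1)` is the unique root of
`(1-Λ*)Λ*^(-β/(β-1)) = L`; (iii) if `L = ∞`, `f(x(t))/g(t) → 1`. -/
theorem stmt_8
    (f g F Finv : ℝ → ℝ) (ξ : ℝ) (x : ℝ → ℝ)
    (hf_cont : Continuous f) (hf_lip : LocallyLipschitz f)
    (hf_sign : ∀ y : ℝ, y ≠ 0 → 0 < y * f y) (hf_zero : f 0 = 0)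
    (hg_cont : ContinuousOn g (Set.Ici 0)) (hg_pos : ∀ t : ℝ, 0 < t → 0 < g t)
    (hF : ∀ y : ℝ, 0 < y → F y = ∫ u in y..(1:ℝ), 1 / f u)
    (hF_top : Tendsto F (nhdsWithin 0 (Set.Ioi 0)) atTop)
    (hF_anti : StrictAntiOn F (Set.Ioi 0))
    (hFinv : ∀ t : ℝ, 0 ≤ t → 0 < Finv t ∧ F (Finv t) = t)
    (hFinv_to0 : Tendsto Finv atTop (nhds 0))
    (hξ : 0 < ξ) (hx : IsSol f g ξ x)
    (β : ℝ) (hβ : 1 < β) (hfRV : RVat0 f β)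
    (θ : ℝ) (hθ : 0 < θ) (hgRV : RVatInf g (-θ))
    (hx_to0 : Tendsto x atTop (nhds 0)) :
    (Tendsto (fun t => g t / f (Finv t)) atTop (nhds 0) →
      Tendsto (fun t => F (x t) / t) atTop (nhds 1)) ∧
    (∀ L : ℝ, 0 < L → Tendsto (fun t => g t / f (Finv t)) atTop (nhds L) →
      ∃ Λ : ℝ, Λ ∈ Set.Ioo (0:ℝ) 1 ∧ (1 - Λ) * Λ ^ (-β / (β - 1)) = L ∧
        (∀ Λ' ∈ Set.Ioo (0:ℝ) 1, (1 - Λ') * Λ' ^ (-β / (β - 1)) = L → Λ' = Λ) ∧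
        Tendsto (fun t => F (x t) / t) atTop (nhds Λ)) ∧
    (Tendsto (fun t => g t / f (Finv t)) atTop atTop →
      Tendsto (fun t => f (x t) / g t) atTop (nhds 1)) := by
  have hp : ∀ y, 0 < y → 0 < f y := fun y hy => by
    have := hf_sign y hy.ne'
    exact (mul_pos_iff_of_pos_left hy).1 this
  have hD := aux_Fderiv f F hf_cont hp hF
  have hxpos := aux_pos f g ξ x hf_zero hg_pos hξ hx
  have hx0p : Tendsto x atTop (𝓝[>] 0) := tendsto_nhdsWithin_iff.2 ⟨hx_to0, hxpos⟩
  have hytop : Tendsto (fun t => F (x t)) atTop atTop := hF_top.comp hx0p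
  have hyd : ∀ᶠ t in atTop, HasDerivAt (fun t => F (x t)) (1 - g t / f (x t)) t := by
    filter_upwards [hxpos, eventually_gt_atTop 0] with t h1 h2
    have h3 : HasDerivAt (fun t => F (x t)) (-(1 / f (x t)) * (-f (x t) + g t)) t :=
      HasDerivAt.comp t (hD (x t) h1) (hx.2.2 t h2)
    refine h3.congr_deriv ?_
    have := (hp _ h1).ne'
    field_simp
    ring
  have hFipos : ∀ᶠ t in atTop, 0 < f (Finv t) := by
    filter_upwards [eventually_ge_atTop 0] with t ht using hp _ (hFinv t ht).1
  have hup : ∀ lam > 0, ∀ C, lam ^ (-β / (β - 1)) < C → ∀ c > 0,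
      (∀ᶠ t in atTop, 1 - g t / f (Finv t) / C ≤ lam - c) →
      ∀ᶠ t in atTop, F (x t) ≤ lam * t := by
    intro lam hl C hC c hc hev
    have hCp : 0 < C := lt_trans (by positivity) hC
    have hA := aux_A f F Finv hf_cont hp hD hF_top hF_anti hFinv hFinv_to0 β hβ hfRV lam hl C hC
    obtain ⟨T, hT⟩ := eventually_atTop.1 (((hev.and hA).and (hxpos.and hyd)).and
      (hFipos.and (eventually_gt_atTop 0)))
    have := aux_barrier (fun t => F (x t) - lam * t) (fun t => 1 - g t / f (x t) - lam) T c hc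
      (fun t ht => by
        have h1 := (hT t ht).1.2.2
        have h0 : HasDerivAt (fun s => lam * s) lam t := by
          simpa using (hasDerivAt_id t).const_mul lam
        exact h1.sub h0)
      (fun t ht hv => by
        obtain ⟨⟨⟨e1, e2⟩, e3, -⟩, e4, e5⟩ := hT t ht
        have h1 := e2 (x t) e3 (by linarith)
        have h2 : g t / f (Finv t) / C ≤ g t / f (x t) := by
          rw [div_div]
          exact div_le_div_of_nonneg_left (hg_pos t e5).le (hp _ e3) (by linarith)
        linarith)
    filter_upwards [this] with t ht
    linarith
  have hlo : ∀ lam > 0, ∀ C > 0, C < lam ^ (-β / (β - 1)) → ∀ c > 0,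
      (∀ᶠ t in atTop, lam + c ≤ 1 - g t / f (Finv t) / C) →
      ∀ᶠ t in atTop, lam * t ≤ F (x t) := by
    intro lam hl C hCp hC c hc hev
    obtain ⟨z0, hz0, hB⟩ := aux_B f F Finv hf_cont hp hD hF_top hF_anti hFinv hFinv_to0 β hβ hfRV
      lam hl C hCp hC
    obtain ⟨T, hT⟩ := eventually_atTop.1 (((hev.and hB).and (hxpos.and hyd)).and
      (hFipos.and ((eventually_gt_atTop 0).and (hx_to0.eventually_lt_const hz0))))
    have := aux_barrier (fun t => lam * t - F (x t)) (fun t => lam - (1 - g t / f (x t))) T c hc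
      (fun t ht => by
        have h1 := (hT t ht).1.2.2
        have h0 : HasDerivAt (fun s => lam * s) lam t := by
          simpa using (hasDerivAt_id t).const_mul lam
        exact h0.sub h1)
      (fun t ht hv => by
        obtain ⟨⟨⟨e1, e2⟩, e3, -⟩, e4, e5, e6⟩ := hT t ht
        have h1 := e2 (x t) e3 e6.le (by linarith)
        have h2 : g t / f (x t) ≤ g t / f (Finv t) / C := by
          rw [div_div]
          exact div_le_div_of_nonneg_left (hg_pos t e5).le (by positivity) (by linarith)
        linarith)
    filter_upwards [this] with t ht
    linarith
  set γ := β / (β - 1) with hγdef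
  have hγ : 0 < γ := div_pos (by linarith) (by linarith)
  have hγ' : -β / (β - 1) = -γ := by rw [hγdef]; ring
  rw [hγ'] at hup hlo ⊢
  have hfin : ∀ L ≥ 0, ∀ Λ > 0, 1 - Λ = L * Λ ^ γ →
      Tendsto (fun t => g t / f (Finv t)) atTop (𝓝 L) →
      Tendsto (fun t => F (x t) / t) atTop (𝓝 Λ) := by
    intro L hL Λ hΛ heq hq
    have hlimC : ∀ lam > 0, Tendsto (fun C : ℝ => 1 - L / C) (𝓝 (lam ^ (-γ)))
        (𝓝 (1 - L * lam ^ γ)) := by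
      intro lam hl
      have h1 : ContinuousAt (fun C : ℝ => 1 - L / C) (lam ^ (-γ)) :=
        continuousAt_const.sub (continuousAt_const.div continuousAt_id (by positivity))
      have h2 := h1.tendsto
      rw [Real.rpow_neg hl.le, div_inv_eq_mul] at h2
      rwa [Real.rpow_neg hl.le]
    rw [tendsto_order]
    constructor
    · intro a ha
      obtain ⟨lam, hl1, hl2⟩ := exists_between (max_lt ha hΛ)
      have hl : 0 < lam := (le_max_right _ _).trans_lt hl1
      have hal : a < lam := (le_max_left _ _).trans_lt hl1
      have hlt : lam < 1 - L * lam ^ γ := by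
        have := Real.rpow_le_rpow hl.le hl2.le hγ.le
        have := mul_le_mul_of_nonneg_left this hL
        linarith
      have hpow : 0 < lam ^ (-γ) := by positivity
      obtain ⟨C, hC1, hC0, hC⟩ := ((((hlimC lam hl).mono_left nhdsWithin_le_nhds).eventually_const_lt
        hlt).and (Ioo_mem_nhdsLT hpow)).exists
      obtain ⟨m, hm1, hm2⟩ := exists_between hC1
      have hqC : Tendsto (fun t => 1 - g t / f (Finv t) / C) atTop (𝓝 (1 - L / C)) :=
        (hq.div_const C).const_sub 1
      have := hlo lam hl C hC0 hC (m - lam) (by linarith) (by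
        filter_upwards [hqC.eventually_const_lt hm2] with t ht
        linarith)
      filter_upwards [this, eventually_gt_atTop 0] with t h1 h2
      exact hal.trans_le ((le_div_iff₀ h2).2 h1)
    · intro a ha
      obtain ⟨lam, hl1, hl2⟩ := exists_between ha
      have hl : 0 < lam := hΛ.trans hl1
      have hlt : 1 - L * lam ^ γ < lam := by
        have := Real.rpow_le_rpow hΛ.le hl1.le hγ.le
        have := mul_le_mul_of_nonneg_left this hL
        linarith
      obtain ⟨C, hC1, hC⟩ := ((((hlimC lam hl).mono_left nhdsWithin_le_nhds).eventually_lt_const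
        hlt).and self_mem_nhdsWithin).exists (f := 𝓝[>] (lam ^ (-γ)))
      obtain ⟨m, hm1, hm2⟩ := exists_between hC1
      have hqC : Tendsto (fun t => 1 - g t / f (Finv t) / C) atTop (𝓝 (1 - L / C)) :=
        (hq.div_const C).const_sub 1
      have := hup lam hl C hC (lam - m) (by linarith) (by
        filter_upwards [hqC.eventually_lt_const hm1] with t ht
        linarith)
      filter_upwards [this, eventually_gt_atTop 0] with t h1 h2
      exact ((div_le_iff₀ h2).2 h1).trans_lt hl2
  refine ⟨fun hq => hfin 0 le_rfl 1 one_pos (by simp) hq, ?_, ?_⟩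
  · intro L hL hq
    obtain ⟨Λ, hΛ, h1, h2⟩ := aux_root L γ hL hγ
    refine ⟨Λ, hΛ, ?_, ?_, hfin L hL.le Λ hΛ.1 h1 hq⟩
    · have := hΛ.1
      rw [h1, mul_assoc, ← Real.rpow_add hΛ.1]
      simp
    · intro Λ' hΛ' h3
      refine h2 Λ' hΛ' ?_
      have := hΛ'.1
      rw [← h3, mul_assoc, ← Real.rpow_add hΛ'.1]
      simp
  · intro hq
    have hsmall : ∀ lam > 0, ∀ᶠ t in atTop, F (x t) ≤ lam * t := by
      intro lam hl
      have hpow : 0 < lam ^ (-γ) := by positivity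
      refine hup lam hl (lam ^ (-γ) + 1) (by linarith) 1 one_pos ?_
      filter_upwards [hq.eventually_ge_atTop ((2 : ℝ) * (lam ^ (-γ) + 1))] with t ht
      have : 2 ≤ g t / f (Finv t) / (lam ^ (-γ) + 1) := by
        rwa [le_div_iff₀ (by linarith)]
      linarith
    have key : ∀ η : ℝ, 1 < η → ∀ᶠ t in atTop,
        f (x t) ≤ η ^ 3 * g t ∧ g t ≤ η ^ 3 * f (x t) := by
      intro η hη
      obtain ⟨ρ, hρ0, hρ1, T0, hT0, hgT⟩ := aux_g g hg_cont hg_pos (-θ) hgRV η hη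
      obtain ⟨z0, hz0, hmono⟩ := aux_f f hf_cont hp β (by linarith) hfRV η hη
      set c1 := 1 - 1 / η with hc1
      have hη0 : 0 < η := by linarith
      have hc1p : 0 < c1 := by
        have : 1 / η < 1 := (div_lt_one hη0).2 hη
        linarith
      have hc2p : 0 < η - 1 := by linarith
      have hc12 : c1 ≤ η - 1 := by
        have : c1 = (η - 1) / η := by rw [hc1]; field_simp
        rw [this]
        exact div_le_self hc2p.le hη.le
      have hlam : 0 < c1 * (1 - ρ) / 2 := by
        have : 0 < 1 - ρ := by linarith
        positivity
      obtain ⟨T1, hT1⟩ := eventually_atTop.1 (((hsmall _ hlam).and hyd).and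
        ((hxpos.and (hx_to0.eventually_lt_const hz0)).and
          ((hytop.eventually_gt_atTop 0).and (eventually_gt_atTop 0))))
      filter_upwards [eventually_ge_atTop T0, eventually_ge_atTop (T1 / ρ), eventually_gt_atTop 0]
        with t ht0 ht1 htp
      have hρt : T1 ≤ ρ * t := by rwa [div_le_iff₀' hρ0] at ht1
      have hρt' : ρ * t < t := by nlinarith
      obtain ⟨⟨a1, -⟩, ⟨a2, a3⟩, a4, -⟩ := hT1 (ρ * t) hρt
      obtain ⟨⟨b1, -⟩, ⟨b2, b3⟩, b4, -⟩ := hT1 t (hρt.trans hρt'.le)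
      have hcty : ContinuousOn (fun t => F (x t)) (Set.Icc (ρ * t) t) := fun s hs =>
        (hT1 s (hρt.trans hs.1)).1.2.continuousAt.continuousWithinAt
      have hne : (Set.Icc (ρ * t) t).Nonempty := ⟨t, hρt'.le, le_rfl⟩
      have hpt : 0 < c1 * (1 - ρ) * t := by nlinarith
      constructor
      · obtain ⟨s, hs, hmin⟩ := isCompact_Icc.exists_isMinOn hne
          (hcty.sub (continuousOn_const.mul continuousOn_id) :
            ContinuousOn (fun s => F (x s) - c1 * s) _)
        have hm : ∀ r ∈ Set.Icc (ρ * t) t, F (x s) - c1 * s ≤ F (x r) - c1 * r := hmin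
        have hmt := hm t ⟨hρt'.le, le_rfl⟩
        have hsne : ρ * t < s := by
          refine lt_of_le_of_ne hs.1 fun h => ?_
          rw [← h] at hmt
          nlinarith
        obtain ⟨⟨-, s1⟩, ⟨s2, s3⟩, s4, s5⟩ := hT1 s (hρt.trans hs.1)
        have hd := aux_left (fun s => F (x s) - c1 * s) (1 - g s / f (x s) - c1) (ρ * t) s hsne
          (by
            have h0 : HasDerivAt (fun s => c1 * s) c1 s := by
              simpa using (hasDerivAt_id s).const_mul c1
            exact s1.sub h0)
          (fun r hr => hm r ⟨hr.1, hr.2.trans hs.2⟩)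
        have h1 : F (x s) ≤ F (x t) := by nlinarith [hs.2]
        have h2 : x t ≤ x s := (hF_anti.le_iff_ge s2 b2).1 h1
        have h3 := hmono _ _ b2 h2 s3.le
        have h4 : 1 / η ≤ g s / f (x s) := by linarith
        have h5 : f (x s) ≤ η * g s := by
          rw [div_le_div_iff₀ hη0 (hp _ s2)] at h4
          linarith
        have h6 := (hgT t ht0 s hs.1 hs.2).1
        calc f (x t) ≤ η * f (x s) := h3
          _ ≤ η * (η * g s) := by gcongr
          _ ≤ η * (η * (η * g t)) := by gcongr
          _ = η ^ 3 * g t := by ring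
      · obtain ⟨s, hs, hmax⟩ := isCompact_Icc.exists_isMaxOn hne
          (hcty.add (continuousOn_const.mul continuousOn_id) :
            ContinuousOn (fun s => F (x s) + (η - 1) * s) _)
        have hm : ∀ r ∈ Set.Icc (ρ * t) t,
          F (x r) + (η - 1) * r ≤ F (x s) + (η - 1) * s := hmax
        have hmt := hm t ⟨hρt'.le, le_rfl⟩
        have hpt2 : c1 * (1 - ρ) * t ≤ (η - 1) * (1 - ρ) * t := by
          have : 0 ≤ 1 - ρ := by linarith
          gcongr
        have hsne : ρ * t < s := by
          refine lt_of_le_of_ne hs.1 fun h => ?_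
          rw [← h] at hmt
          have : c1 * (1 - ρ) / 2 * (ρ * t) ≤ c1 * (1 - ρ) / 2 * t := by gcongr
          nlinarith
        obtain ⟨⟨-, s1⟩, ⟨s2, s3⟩, s4, s5⟩ := hT1 s (hρt.trans hs.1)
        have hd := aux_left (fun s => -(F (x s) + (η - 1) * s)) (-(1 - g s / f (x s) + (η - 1)))
          (ρ * t) s hsne
          (by
            have h0 : HasDerivAt (fun s => (η - 1) * s) (η - 1) s := by
              simpa using (hasDerivAt_id s).const_mul (η - 1)
            exact (s1.add h0).neg)
          (fun r hr => neg_le_neg (hm r ⟨hr.1, hr.2.trans hs.2⟩))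
        have h1 : F (x t) ≤ F (x s) := by nlinarith [hs.2]
        have h2 : x s ≤ x t := (hF_anti.le_iff_ge b2 s2).1 h1
        have h3 := hmono _ _ s2 h2 b3.le
        have h4 : g s / f (x s) ≤ η := by linarith
        have h5 : g s ≤ η * f (x s) := by
          rwa [div_le_iff₀ (hp _ s2)] at h4
        have h6 := (hgT t ht0 s hs.1 hs.2).2
        calc g t ≤ η * g s := h6
          _ ≤ η * (η * f (x s)) := by gcongr
          _ ≤ η * (η * (η * f (x t))) := by gcongr
          _ = η ^ 3 * f (x t) := by ring
    have hη : ∀ b : ℝ, 1 < b → ∃ η, 1 < η ∧ η ^ 3 < b := by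
      intro b hb
      have h1 : Tendsto (fun η : ℝ => η ^ 3) (𝓝[>] 1) (𝓝 (1 ^ 3)) :=
        ((continuous_pow 3).tendsto 1).mono_left nhdsWithin_le_nhds
      rw [one_pow] at h1
      obtain ⟨η, e1, e2⟩ := ((h1.eventually_lt_const hb).and self_mem_nhdsWithin).exists
      exact ⟨η, e2, e1⟩
    rw [tendsto_order]
    constructor
    · intro a ha
      rcases le_or_gt a 0 with h0 | h0
      · filter_upwards [hxpos, eventually_gt_atTop 0] with t h1 h2
        exact h0.trans_lt (div_pos (hp _ h1) (hg_pos t h2))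
      · obtain ⟨η, h1, h2⟩ := hη (1 / a) ((one_lt_div h0).2 ha)
        filter_upwards [key η h1, hxpos, eventually_gt_atTop 0] with t e1 e2 e3
        rw [lt_div_iff₀ (hg_pos t e3)]
        have h3 : η ^ 3 * f (x t) < 1 / a * f (x t) := mul_lt_mul_of_pos_right h2 (hp _ e2)
        have h4 : g t < 1 / a * f (x t) := e1.2.trans_lt h3
        rw [one_div, lt_inv_mul_iff₀ h0] at h4
        exact h4
    · intro a ha
      obtain ⟨η, h1, h2⟩ := hη a ha
      filter_upwards [key η h1, eventually_gt_atTop 0] with t e1 e3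
      rw [div_lt_iff₀ (hg_pos t e3)]
      exact e1.1.trans_lt (mul_lt_mul_of_pos_right h2 (hg_pos t e3))
end
end

section
/- Assume the base hypotheses and Condition (M), suppose f ∈ RV₀(β) for some β > 1, and suppose there exists L > 0 such that lim_{t→∞} g(t)/(f∘F⁻¹)(t) = L. Let Λ* ∈ (0,1) be the unique solution of (1 - Λ*)·Λ*^{-β/(β-1)} = L, and let x be the unique continuous solution of x'(t) = -f(x(t)) + g(t), x(0) = ξ > 0. Then lim_{t→∞} x(t)/F⁻¹(t) = Λ*^{-1/(β-1)} > 1; in particular x decays at the same regularly varying order as, but strictly more slowly than, the solution y of the unperturbed equation y' = -f(y), for which y(t)/F⁻¹(t) → 1. -/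
open Filter Real Set Topology MeasureTheory

noncomputable section

lemma barrier_aux (E E' : ℝ → ℝ) (T η : ℝ) (hη : 0 < η)
    (hd : ∀ t, T ≤ t → HasDerivAt E (E' t) t)
    (h : ∀ t, T ≤ t → E t ≤ 0 → η ≤ E' t) : ∀ᶠ t in atTop, 0 ≤ E t := by
  have h1 : ∃ t1, T ≤ t1 ∧ 0 ≤ E t1 := by
    by_contra! hcon
    have hT := hcon T le_rfl
    set t := T + (-E T) / η with ht
    have hlt : T < t := by
      have : 0 < (-E T) / η := div_pos (by linarith) hη
      linarith
    have key := (convex_Icc T t).mul_sub_le_image_sub_of_le_deriv (f := E) (C := η)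
      (fun s hs => (hd s hs.1).continuousAt.continuousWithinAt)
      (fun s hs => by
        rw [interior_Icc] at hs
        exact (hd s hs.1.le).differentiableAt.differentiableWithinAt)
      (fun s hs => by
        rw [interior_Icc] at hs
        rw [(hd s hs.1.le).deriv]
        exact h s hs.1.le (hcon s hs.1.le).le)
      T ⟨le_rfl, hlt.le⟩ t ⟨hlt.le, le_rfl⟩ hlt.le
    have h2 := hcon t hlt.le
    have : η * (t - T) = -E T := by rw [ht]; field_simp; ring
    linarith
  obtain ⟨t1, hTt, h0⟩ := h1
  filter_upwards [eventually_ge_atTop t1] with t ht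
  have := image_le_of_deriv_right_lt_deriv_boundary (f := fun s => -E s) (f' := fun s => -E' s)
    (a := t1) (b := t) (B := fun _ => (0:ℝ)) (B' := fun _ => 0)
    (fun s hs => ((hd s (hTt.trans hs.1)).neg).continuousAt.continuousWithinAt)
    (fun s hs => ((hd s (hTt.trans hs.1)).neg).hasDerivWithinAt)
    (by simpa using h0) (fun s => hasDerivAt_const s 0)
    (fun s hs he => by
      have := h s (hTt.trans hs.1) (by simp at he; linarith)
      linarith) ⟨ht, le_rfl⟩
  simpa using this

lemma almost_mono (f : ℝ → ℝ) (hpos : ∀ y, 0 < y → 0 < f y)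
    (hM : ∃ δ : ℝ, 0 < δ ∧ ∃ φ : ℝ → ℝ, StrictMonoOn φ (Set.Ioo 0 δ) ∧
      Tendsto (fun y => f y / φ y) (nhdsWithin 0 (Set.Ioi 0)) (nhds 1))
    (κ : ℝ) (hκ : 1 < κ) : ∃ δ : ℝ, 0 < δ ∧ ∀ a b, 0 < a → a ≤ b → b < δ → f a ≤ κ * f b := by
  obtain ⟨δ, hδ, φ, hφ, hlim⟩ := hM
  set p := Real.sqrt κ with hp
  have hp1 : 1 < p := by rw [hp]; exact Real.lt_sqrt_of_sq_lt (by simpa using hκ)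
  have hpp : p * p = κ := Real.mul_self_sqrt (by linarith)
  have hpi : p⁻¹ < 1 := inv_lt_one_of_one_lt₀ hp1
  have ev := (hlim.eventually (lt_mem_nhds hpi)).and (hlim.eventually (gt_mem_nhds hp1))
  rw [eventually_nhdsWithin_iff, Metric.eventually_nhds_iff] at ev
  obtain ⟨r, hr, hball⟩ := ev
  have hz : ∀ z, 0 < z → z < r → 0 < φ z ∧ f z ≤ p * φ z ∧ φ z ≤ p * f z := by
    intro z hz hzr
    obtain ⟨h1, h2⟩ := hball (y := z) (by simpa [abs_of_pos hz] using hzr) hz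
    have hq : 0 < f z / φ z := lt_trans (by positivity) h1
    have hφz : 0 < φ z := by
      rcases (div_pos_iff.1 hq) with h | h
      · exact h.2
      · exact absurd (hpos z hz) (by linarith [h.1])
    refine ⟨hφz, ?_, ?_⟩
    · exact ((div_lt_iff₀ hφz).1 h2).le
    · rw [lt_div_iff₀ hφz, inv_mul_lt_iff₀ (by linarith)] at h1
      exact h1.le
  refine ⟨min δ r, lt_min hδ hr, fun a b ha hab hb => ?_⟩
  have hb1 := hb.trans_le (min_le_left _ _)
  have hb2 := hb.trans_le (min_le_right _ _)
  obtain ⟨-, h1, -⟩ := hz a ha (by linarith)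
  obtain ⟨-, -, h2⟩ := hz b (by linarith) hb2
  have h3 : φ a ≤ φ b := hφ.monotoneOn ⟨ha, by linarith⟩ ⟨by linarith, hb1⟩ hab
  calc f a ≤ p * φ a := h1
    _ ≤ p * (p * f b) := by gcongr; linarith
    _ = κ * f b := by rw [← hpp]; ring

lemma F_deriv (f F : ℝ → ℝ) (hf_cont : Continuous f) (hpos : ∀ y, 0 < y → 0 < f y)
    (hF : ∀ y : ℝ, 0 < y → F y = ∫ u in y..(1:ℝ), 1 / f u) (y : ℝ) (hy : 0 < y) :
    HasStrictDerivAt F (-(1 / f y)) y := by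
  have hc : ContinuousOn (fun u => 1 / f u) (Set.Ioi 0) :=
    continuousOn_const.div hf_cont.continuousOn (fun u hu => (hpos u hu).ne')
  have hint : IntervalIntegrable (fun u => 1 / f u) volume y 1 := by
    apply ContinuousOn.intervalIntegrable
    apply hc.mono
    intro z hz
    rw [Set.mem_uIcc] at hz
    rcases hz with h | h
    · exact lt_of_lt_of_le hy h.1
    · exact lt_of_lt_of_le one_pos h.1
  have hmem : Set.Ioi (0:ℝ) ∈ 𝓝 y := Ioi_mem_nhds hy
  have h := intervalIntegral.integral_hasStrictDerivAt_left hint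
    (hc.stronglyMeasurableAtFilter isOpen_Ioi y hy) (hc.continuousAt hmem)
  refine h.congr_of_eventuallyEq ?_
  filter_upwards [hmem] with z hz
  exact (hF z hz).symm

lemma Finv_deriv (f F Finv : ℝ → ℝ) (hf_cont : Continuous f) (hpos : ∀ y, 0 < y → 0 < f y)
    (hF : ∀ y : ℝ, 0 < y → F y = ∫ u in y..(1:ℝ), 1 / f u)
    (hF_anti : StrictAntiOn F (Set.Ioi 0))
    (hFinv : ∀ t : ℝ, 0 ≤ t → 0 < Finv t ∧ F (Finv t) = t) (t : ℝ) (ht : 0 < t) :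
    HasDerivAt Finv (-f (Finv t)) t := by
  obtain ⟨h0, h1⟩ := hFinv t ht.le
  have hs := F_deriv f F hf_cont hpos hF (Finv t) h0
  have hne : -(1 / f (Finv t)) ≠ 0 := by
    have := hpos _ h0
    exact neg_ne_zero.2 (by positivity)
  have hev : ∀ᶠ z in 𝓝 (Finv t), Finv (F z) = z := by
    have hc := hs.hasDerivAt.continuousAt
    filter_upwards [Ioi_mem_nhds h0, hc.eventually (lt_mem_nhds (show 0 < F (Finv t) by rwa [h1]))]
      with z hz hz2
    obtain ⟨a, b⟩ := hFinv (F z) hz2.le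
    exact hF_anti.injOn a hz b
  have := hs.to_local_left_inverse hne hev
  rw [h1] at this
  refine this.hasDerivAt.congr_deriv ?_
  rw [← neg_inv]; simp

lemma sol_pos (f g F : ℝ → ℝ) (ξ : ℝ) (x : ℝ → ℝ)
    (hpos : ∀ y, 0 < y → 0 < f y)
    (hFd : ∀ y, 0 < y → HasDerivAt F (-(1 / f y)) y)
    (hF_top : Tendsto F (nhdsWithin 0 (Set.Ioi 0)) atTop)
    (hg : ∀ t : ℝ, 0 < t → 0 ≤ g t)
    (hξ : 0 < ξ) (hx : IsSol f g ξ x) : ∀ t, 0 ≤ t → 0 < x t := by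
  obtain ⟨hxc, hx0, hxd⟩ := hx
  by_contra! hcon
  set S := Set.Ici (0:ℝ) ∩ Set.preimage x (Set.Iic 0) with hS
  have hSc : IsClosed S := hxc.preimage_isClosed_of_isClosed isClosed_Ici isClosed_Iic
  have hSne : S.Nonempty := by
    obtain ⟨t, h1, h2⟩ := hcon
    exact ⟨t, h1, h2⟩
  have hSb : BddBelow S := ⟨0, fun s hs => hs.1⟩
  set t0 := sInf S with ht0
  have hmem : t0 ∈ S := hSc.csInf_mem hSne hSb
  have ht00 : 0 ≤ t0 := hmem.1
  have hxt0 : x t0 ≤ 0 := hmem.2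
  have hlt : ∀ t, 0 ≤ t → t < t0 → 0 < x t := by
    intro t h1 h2
    by_contra! h3
    exact absurd (csInf_le hSb (show t ∈ S from ⟨h1, h3⟩)) (not_le.2 h2)
  have ht0pos : 0 < t0 := by
    rcases ht00.lt_or_eq with h | h
    · exact h
    · rw [← h, hx0] at hxt0; linarith
  have hc0 : ContinuousAt x t0 := (hxd t0 ht0pos).continuousAt
  have hev : ∀ᶠ t in 𝓝[<] t0, t0 / 2 < t ∧ t < t0 := by
    filter_upwards [Ioo_mem_nhdsLT (show t0 / 2 < t0 by linarith)] with t ht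
    exact ht
  have hxlim : Tendsto x (𝓝[<] t0) (𝓝 (x t0)) := hc0.tendsto.mono_left nhdsWithin_le_nhds
  have hxz : x t0 = 0 := by
    apply le_antisymm hxt0
    apply ge_of_tendsto hxlim
    filter_upwards [hev] with t ht
    exact (hlt t (by linarith [ht.1]) ht.2).le
  rw [hxz] at hxlim
  have hxlim2 : Tendsto x (𝓝[<] t0) (𝓝[>] 0) := by
    apply tendsto_nhdsWithin_of_tendsto_nhds_of_eventually_within _ hxlim
    filter_upwards [hev] with t ht
    exact hlt t (by linarith [ht.1]) ht.2
  have hFt := (hF_top.comp hxlim2).eventually (eventually_gt_atTop (F (x (t0 / 2)) + t0))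
  obtain ⟨t, ht1, ht2⟩ := (hFt.and hev).exists
  have hd : ∀ s, t0 / 2 ≤ s → s < t0 →
      HasDerivAt (fun s => F (x s)) (-(1 / f (x s)) * (-f (x s) + g s)) s := by
    intro s h1 h2
    exact (hFd (x s) (hlt s (by linarith) h2)).comp s (hxd s (by linarith))
  have key := (convex_Icc (t0 / 2) t).image_sub_le_mul_sub_of_deriv_le (f := fun s => F (x s)) (C := 1)
      (fun s hs => (hd s hs.1 (lt_of_le_of_lt hs.2 ht2.2)).continuousAt.continuousWithinAt)
      (fun s hs => by
        rw [interior_Icc] at hs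
        exact (hd s hs.1.le (hs.2.trans ht2.2)).differentiableAt.differentiableWithinAt)
      (fun s hs => by
        rw [interior_Icc] at hs
        rw [(hd s hs.1.le (hs.2.trans ht2.2)).deriv]
        have h3 := hpos _ (hlt s (by linarith [hs.1]) (hs.2.trans ht2.2))
        have h4 := hg s (by linarith [hs.1])
        have h5 : 0 ≤ g s / f (x s) := by positivity
        have : -(1 / f (x s)) * (-f (x s) + g s) = 1 - g s / f (x s) := by field_simp; ring
        linarith)
      (t0 / 2) ⟨le_rfl, ht2.1.le⟩ t ⟨ht2.1.le, le_rfl⟩ ht2.1.le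
  simp only [Function.comp] at ht1
  linarith [ht2.2]

lemma sol_to_zero (f g : ℝ → ℝ) (x y : ℝ → ℝ) (L : ℝ) (hL0 : 0 ≤ L)
    (hf_cont : Continuous f) (hpos : ∀ y, 0 < y → 0 < f y)
    (hxd : ∀ t : ℝ, 0 < t → HasDerivAt x (-f (x t) + g t) t)
    (hxp : ∀ t, 0 ≤ t → 0 < x t)
    (hyp : ∀ t, 0 ≤ t → 0 < y t)
    (hyd : ∀ t, 0 < t → HasDerivAt y (-f (y t)) t)
    (hy0 : Tendsto y atTop (𝓝 0))
    (hL : Tendsto (fun t => g t / f (y t)) atTop (nhds L)) : Tendsto x atTop (𝓝 0) := by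
  obtain ⟨T, hT⟩ := eventually_atTop.1
    ((hL.eventually (gt_mem_nhds (show L < L + 1 by linarith))).and (eventually_gt_atTop 0))
  set W := fun t => x t + (L + 1) * y t with hW
  set W' := fun t => (-f (x t) + g t) + (L + 1) * (-f (y t)) with hW'
  have hWd : ∀ t, T ≤ t → HasDerivAt W (W' t) t := fun t ht =>
    (hxd t (hT t ht).2).add ((hyd t (hT t ht).2).const_mul _)
  have hWle : ∀ t, T ≤ t → W' t ≤ -f (x t) := by
    intro t ht
    have h1 := (hT t ht).1
    rw [div_lt_iff₀ (hpos _ (hyp t (hT t ht).2.le))] at h1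
    simp only [hW']; linarith
  have hanti : AntitoneOn W (Set.Ici T) := by
    apply antitoneOn_of_deriv_nonpos (convex_Ici T)
    · exact fun s hs => (hWd s hs).continuousAt.continuousWithinAt
    · intro s hs
      rw [interior_Ici] at hs
      exact (hWd s (le_of_lt hs)).differentiableAt.differentiableWithinAt
    · intro s hs
      rw [interior_Ici] at hs
      have hs : T < s := hs
      rw [(hWd s hs.le).deriv]
      have := hpos _ (hxp s (hT s hs.le).2.le)
      linarith [hWle s hs.le]
  rw [tendsto_order]
  constructor
  · intro a ha
    filter_upwards [eventually_ge_atTop 0] with t ht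
    linarith [hxp t ht]
  · intro ε' hε'
    set ε := ε' / 2 with hε
    have hεp : 0 < ε := by positivity
    have hWT : ∀ t, T ≤ t → x t ≤ W t := fun t ht => by
      have := hyp t (hT t ht).2.le
      simp only [hW]; nlinarith
    obtain ⟨c, hc, hcmin⟩ : ∃ c, 0 < c ∧ ∀ z ∈ Set.Icc (ε / 2) (W T), c ≤ f z := by
      rcases (Set.Icc (ε / 2) (W T)).eq_empty_or_nonempty with h | h
      · exact ⟨1, one_pos, fun z hz => by rw [h] at hz; exact absurd hz (Set.notMem_empty z)⟩
      · obtain ⟨z, hz, hm⟩ := isCompact_Icc.exists_isMinOn h hf_cont.continuousOn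
        exact ⟨f z, hpos z (by linarith [hz.1]), fun w hw => hm hw⟩
    obtain ⟨T2, hT2⟩ := eventually_atTop.1
      (hy0.eventually (gt_mem_nhds (show 0 < ε / 2 / (L + 1) by positivity)))
    have := barrier_aux (fun t => ε - W t) (fun t => - W' t) (max T T2) c hc
      (fun t ht => by
        simpa using (hWd t ((le_max_left _ _).trans ht)).const_sub ε)
      (fun t ht hE => by
        have h1 := (le_max_left _ _).trans ht
        have h2 := hT2 t ((le_max_right _ _).trans ht)
        rw [lt_div_iff₀ (by linarith)] at h2
        have h3 : ε ≤ x t + (L + 1) * y t := by simp only [hW] at hE; linarith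
        have h4 := hcmin (x t) ⟨by linarith, (hWT t h1).trans
          (hanti (Set.mem_Ici.2 le_rfl) (Set.mem_Ici.2 h1) h1)⟩
        linarith [hWle t h1])
    filter_upwards [this, eventually_ge_atTop T] with t h1 h2
    have := hWT t h2
    linarith

lemma exists_kappa (p : ℝ → ℝ) (hp : ContinuousAt p 1) (h : 0 < p 1) : ∃ κ, 1 < κ ∧ 0 < p κ := by
  have h1 : ∀ᶠ k in 𝓝[>] (1:ℝ), 0 < p k :=
    (hp.eventually (lt_mem_nhds h)).filter_mono nhdsWithin_le_nhds
  obtain ⟨k, h2, h3⟩ := (h1.and self_mem_nhdsWithin).exists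
  exact ⟨k, h3, h2⟩

lemma core (f g F Finv : ℝ → ℝ) (ξ : ℝ) (x : ℝ → ℝ)
    (hf_cont : Continuous f)
    (hpos : ∀ y : ℝ, 0 < y → 0 < f y)
    (hg : ∀ t : ℝ, 0 < t → 0 ≤ g t)
    (hF : ∀ y : ℝ, 0 < y → F y = ∫ u in y..(1:ℝ), 1 / f u)
    (hF_top : Tendsto F (nhdsWithin 0 (Set.Ioi 0)) atTop)
    (hF_anti : StrictAntiOn F (Set.Ioi 0))
    (hFinv : ∀ t : ℝ, 0 ≤ t → 0 < Finv t ∧ F (Finv t) = t)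
    (hFinv_to0 : Tendsto Finv atTop (nhds 0))
    (hξ : 0 < ξ) (hx : IsSol f g ξ x)
    (hM : ∃ δ : ℝ, 0 < δ ∧ ∃ φ : ℝ → ℝ, StrictMonoOn φ (Set.Ioo 0 δ) ∧
      Tendsto (fun y => f y / φ y) (nhdsWithin 0 (Set.Ioi 0)) (nhds 1))
    (β : ℝ) (hβ : 1 < β) (hfRV : RVat0 f β)
    (L : ℝ) (hL0 : 0 ≤ L)
    (hL : Tendsto (fun t => g t / f (Finv t)) atTop (nhds L))
    (μ : ℝ) (hμ : 1 ≤ μ) (hμL : μ ^ β - μ = L) :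
    Tendsto (fun t => x t / Finv t) atTop (nhds μ) := by
  have hFd : ∀ y, 0 < y → HasDerivAt F (-(1 / f y)) y := fun y hy =>
    (F_deriv f F hf_cont hpos hF y hy).hasDerivAt
  have hxp := sol_pos f g F ξ x hpos hFd hF_top hg hξ hx
  have hxd := hx.2.2
  have hyd := Finv_deriv f F Finv hf_cont hpos hF hF_anti hFinv
  have hyp : ∀ t, 0 ≤ t → 0 < Finv t := fun t ht => (hFinv t ht).1
  have hx0 := sol_to_zero f g x Finv L hL0 hf_cont hpos hxd hxp hyp hyd hFinv_to0 hL
  have hy0 : Tendsto Finv atTop (𝓝[>] 0) := by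
    apply tendsto_nhdsWithin_of_tendsto_nhds_of_eventually_within _ hFinv_to0
    filter_upwards [eventually_ge_atTop 0] with t ht
    exact hyp t ht
  have hDd : ∀ lam, 0 < lam → ∀ t, 0 < t →
      HasDerivAt (fun t => F (x t) - F (lam * Finv t))
        (1 - g t / f (x t) - lam * (f (Finv t) / f (lam * Finv t))) t := by
    intro lam hlam t ht
    have hx1 := hxp t ht.le
    have hy1 := hyp t ht.le
    have a1 := hpos _ hx1
    have a2 := hpos _ (mul_pos hlam hy1)
    have h1 := (hFd (x t) hx1).comp t (hxd t ht)
    have h2 := (hFd (lam * Finv t) (mul_pos hlam hy1)).comp t ((hyd t ht).const_mul lam)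
    refine (h1.sub h2).congr_deriv ?_
    field_simp
    ring
  have hr : ∀ lam, 0 < lam →
      Tendsto (fun t => f (Finv t) / f (lam * Finv t)) atTop (𝓝 ((lam ^ β)⁻¹)) := by
    intro lam hlam
    have := ((hfRV lam hlam).comp hy0).inv₀ (Real.rpow_pos_of_pos hlam β).ne'
    refine this.congr (fun t => ?_)
    simp
  have hgr : ∀ lam, 0 < lam →
      Tendsto (fun t => g t / f (lam * Finv t)) atTop (𝓝 (L * (lam ^ β)⁻¹)) := by
    intro lam hlam
    refine (hL.mul (hr lam hlam)).congr' ?_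
    filter_upwards [eventually_ge_atTop 0] with t ht
    have a1 := hpos _ (hyp t ht)
    have a2 := hpos _ (mul_pos hlam (hyp t ht))
    field_simp
  have hly0 : ∀ lam : ℝ, Tendsto (fun t => lam * Finv t) atTop (𝓝 0) := by
    intro lam
    simpa using hFinv_to0.const_mul lam
  have hfac : ∀ s : ℝ, 0 < s → s ^ β = s * s ^ (β - 1) := by
    intro s hs
    have := Real.rpow_add hs 1 (β - 1)
    rw [Real.rpow_one] at this
    rw [← this]; congr 1; ring
  have hupper : ∀ lam, μ < lam → ∀ᶠ t in atTop, x t ≤ lam * Finv t := by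
    intro lam hlam
    have hl0 : 0 < lam := by linarith
    have hlb : 0 < lam ^ β := Real.rpow_pos_of_pos hl0 β
    have hgap : L < lam ^ β - lam := by
      rw [← hμL, hfac lam hl0, hfac μ (by linarith)]
      have h1 : μ ^ (β - 1) < lam ^ (β - 1) :=
        Real.rpow_lt_rpow (by linarith) hlam (by linarith)
      have h2 : 1 ≤ μ ^ (β - 1) := Real.one_le_rpow hμ (by linarith)
      nlinarith
    obtain ⟨κ, hκ1, hκ⟩ := exists_kappa (fun k => lam ^ β - lam - k * L)
      (by fun_prop) (by linarith)
    obtain ⟨δ, hδ, hmono⟩ := almost_mono f hpos hM κ hκ1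
    have hlim : Tendsto (fun t => 1 - κ * (g t / f (lam * Finv t))
        - lam * (f (Finv t) / f (lam * Finv t))) atTop
        (𝓝 (1 - κ * (L * (lam ^ β)⁻¹) - lam * (lam ^ β)⁻¹)) :=
      ((hgr lam hl0).const_mul κ |>.const_sub 1).sub ((hr lam hl0).const_mul lam)
    set c := 1 - κ * (L * (lam ^ β)⁻¹) - lam * (lam ^ β)⁻¹ with hc
    have hcpos : 0 < c := by
      have : c = (lam ^ β - lam - κ * L) * (lam ^ β)⁻¹ := by rw [hc]; field_simp; ring
      rw [this]; exact mul_pos hκ (inv_pos.2 hlb)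
    obtain ⟨T, hT⟩ := eventually_atTop.1
      ((hlim.eventually (lt_mem_nhds (show c / 2 < c by linarith))).and
        ((hx0.eventually (gt_mem_nhds hδ)).and (eventually_gt_atTop 0)))
    have hb := barrier_aux _ _ T (c / 2) (by positivity) (fun t ht => hDd lam hl0 t (hT t ht).2.2)
      (fun t ht hE => by
        obtain ⟨h1, h2, h3⟩ := hT t ht
        have hx1 := hxp t h3.le
        have hly := mul_pos hl0 (hyp t h3.le)
        have hle : lam * Finv t ≤ x t := by
          by_contra! hlt
          have := hF_anti hx1 hly hlt
          linarith
        have hm := hmono _ _ hly hle h2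
        have a1 := hpos _ hx1
        have a2 := hpos _ hly
        have : g t / f (x t) ≤ κ * (g t / f (lam * Finv t)) := by
          rw [← mul_div_assoc, div_le_div_iff₀ a1 a2]
          nlinarith [hg t h3]
        linarith)
    filter_upwards [hb, eventually_ge_atTop 0] with t h1 h3
    by_contra! hlt
    have := hF_anti (mul_pos hl0 (hyp t h3)) (hxp t h3) hlt
    linarith
  have hlower : ∀ lam, 0 < lam → lam < μ → ∀ᶠ t in atTop, lam * Finv t ≤ x t := by
    intro lam hl0 hlam
    have hlb : 0 < lam ^ β := Real.rpow_pos_of_pos hl0 β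
    have hgap : lam ^ β - lam < L := by
      rw [hfac lam hl0]
      rcases lt_or_ge lam 1 with h | h
      · have : lam ^ (β - 1) < 1 := Real.rpow_lt_one hl0.le h (by linarith)
        nlinarith
      · rw [← hμL, hfac μ (by linarith)]
        have h1 : lam ^ (β - 1) < μ ^ (β - 1) :=
          Real.rpow_lt_rpow hl0.le hlam (by linarith)
        have h2 : 1 ≤ lam ^ (β - 1) := Real.one_le_rpow h (by linarith)
        nlinarith
    obtain ⟨κ, hκ1, hκ⟩ := exists_kappa (fun k => k⁻¹ * L + lam - lam ^ β)
      (by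
        have : ContinuousAt (fun k : ℝ => k⁻¹) 1 := continuousAt_inv₀ one_ne_zero
        fun_prop) (by simp only [inv_one]; linarith)
    obtain ⟨δ, hδ, hmono⟩ := almost_mono f hpos hM κ hκ1
    have hlim : Tendsto (fun t => κ⁻¹ * (g t / f (lam * Finv t))
        + lam * (f (Finv t) / f (lam * Finv t)) - 1) atTop
        (𝓝 (κ⁻¹ * (L * (lam ^ β)⁻¹) + lam * (lam ^ β)⁻¹ - 1)) :=
      (((hgr lam hl0).const_mul κ⁻¹).add ((hr lam hl0).const_mul lam)).sub_const 1
    set c := κ⁻¹ * (L * (lam ^ β)⁻¹) + lam * (lam ^ β)⁻¹ - 1 with hc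
    have hcpos : 0 < c := by
      have : c = (κ⁻¹ * L + lam - lam ^ β) * (lam ^ β)⁻¹ := by rw [hc]; field_simp
      rw [this]; exact mul_pos hκ (inv_pos.2 hlb)
    obtain ⟨T, hT⟩ := eventually_atTop.1
      ((hlim.eventually (lt_mem_nhds (show c / 2 < c by linarith))).and
        (((hly0 lam).eventually (gt_mem_nhds hδ)).and (eventually_gt_atTop 0)))
    have hb := barrier_aux _ _ T (c / 2) (by positivity)
      (fun t ht => (hDd lam hl0 t (hT t ht).2.2).neg)
      (fun t ht hE => by
        obtain ⟨h1, h2, h3⟩ := hT t ht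
        have hx1 := hxp t h3.le
        have hly := mul_pos hl0 (hyp t h3.le)
        have hle : x t ≤ lam * Finv t := by
          by_contra! hlt
          have := hF_anti hly hx1 hlt
          simp only [Pi.neg_apply] at hE
          linarith
        have hm := hmono _ _ hx1 hle h2
        have a1 := hpos _ hx1
        have a2 := hpos _ hly
        have : κ⁻¹ * (g t / f (lam * Finv t)) ≤ g t / f (x t) := by
          rw [inv_mul_le_iff₀ (by linarith), ← mul_div_assoc, div_le_div_iff₀ a2 a1]
          nlinarith [hg t h3]
        linarith)
    filter_upwards [hb, eventually_ge_atTop 0] with t h1 h3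
    by_contra! hlt
    have := hF_anti (hxp t h3) (mul_pos hl0 (hyp t h3)) hlt
    simp only [Pi.neg_apply] at h1
    linarith
  rw [tendsto_order]
  constructor
  · intro a ha
    obtain ⟨l, hl1, hl2⟩ := exists_between (max_lt ha (show 0 < μ by linarith))
    filter_upwards [hlower l ((le_max_right _ _).trans_lt hl1) hl2, eventually_ge_atTop 0]
      with t h1 h2
    rw [lt_div_iff₀ (hyp t h2)]
    have := (le_max_left a 0).trans_lt hl1
    nlinarith [hyp t h2]
  · intro a ha
    obtain ⟨l, hl1, hl2⟩ := exists_between ha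
    filter_upwards [hupper l hl1, eventually_ge_atTop 0] with t h1 h2
    rw [div_lt_iff₀ (hyp t h2)]
    nlinarith [hyp t h2]

/-- Consequence of Theorem 2.3(i): under the base hypotheses and Condition (M), if
`f ∈ RV₀(β)` with `β > 1`, `g(t)/(f∘F⁻¹)(t) → L > 0`, and `Λ* ∈ (0,1)` solves
`(1-Λ*)Λ*^(-β/(β-1)) = L`, then `x(t)/F⁻¹(t) → Λ*^(-1/(β-1)) > 1`; in particular the
solution of the perturbed equation decays at the same regularly varying order as, but
strictly more slowly than, any solution `y` of the unperturbed equation `y' = -f(y)`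
with `y(0) = ζ > 0`, for which `y(t)/F⁻¹(t) → 1`. -/
theorem stmt_11
    (f g F Finv : ℝ → ℝ) (ξ : ℝ) (x : ℝ → ℝ)
    (hf_cont : Continuous f) (hf_lip : LocallyLipschitz f)
    (hf_sign : ∀ y : ℝ, y ≠ 0 → 0 < y * f y) (hf_zero : f 0 = 0)
    (hg_cont : ContinuousOn g (Set.Ici 0)) (hg_pos : ∀ t : ℝ, 0 < t → 0 < g t)
    (hF : ∀ y : ℝ, 0 < y → F y = ∫ u in y..(1:ℝ), 1 / f u)
    (hF_top : Tendsto F (nhdsWithin 0 (Set.Ioi 0)) atTop)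
    (hF_anti : StrictAntiOn F (Set.Ioi 0))
    (hFinv : ∀ t : ℝ, 0 ≤ t → 0 < Finv t ∧ F (Finv t) = t)
    (hFinv_to0 : Tendsto Finv atTop (nhds 0))
    (hξ : 0 < ξ) (hx : IsSol f g ξ x)
    (hM : ∃ δ : ℝ, 0 < δ ∧ ∃ φ : ℝ → ℝ, StrictMonoOn φ (Set.Ioo 0 δ) ∧
      Tendsto (fun y => f y / φ y) (nhdsWithin 0 (Set.Ioi 0)) (nhds 1))
    (β : ℝ) (hβ : 1 < β) (hfRV : RVat0 f β)
    (L : ℝ) (hLpos : 0 < L)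
    (hL : Tendsto (fun t => g t / f (Finv t)) atTop (nhds L))
    (Λ : ℝ) (hΛ : Λ ∈ Set.Ioo (0:ℝ) 1) (hΛeq : (1 - Λ) * Λ ^ (-β / (β - 1)) = L) :
    Tendsto (fun t => x t / Finv t) atTop (nhds (Λ ^ (-1 / (β - 1)))) ∧
    1 < Λ ^ (-1 / (β - 1)) ∧
    (∀ ζ : ℝ, 0 < ζ → ∀ y : ℝ → ℝ, IsSol f (fun _ => 0) ζ y →
      Tendsto (fun t => y t / Finv t) atTop (nhds 1)) := by
  have hpos : ∀ y : ℝ, 0 < y → 0 < f y := fun y hy =>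
    (mul_pos_iff_of_pos_left hy).1 (hf_sign y hy.ne')
  obtain ⟨hΛ0, hΛ1⟩ := hΛ
  have hb : 0 < β - 1 := by linarith
  have hμ : 1 < Λ ^ (-1 / (β - 1)) :=
    Real.one_lt_rpow_of_pos_of_lt_one_of_neg hΛ0 hΛ1 (div_neg_of_neg_of_pos (by norm_num) hb)
  refine ⟨?_, hμ, ?_⟩
  · refine core f g F Finv ξ x hf_cont hpos (fun t ht => (hg_pos t ht).le) hF hF_top hF_anti hFinv
      hFinv_to0 hξ hx hM β hβ hfRV L hLpos.le hL _ hμ.le ?_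
    rw [← hΛeq, ← Real.rpow_mul hΛ0.le, sub_mul, one_mul]
    have h1 : -1 / (β - 1) * β = -β / (β - 1) := by ring
    have h2 : Λ * Λ ^ (-β / (β - 1)) = Λ ^ (-1 / (β - 1)) := by
      have := Real.rpow_add hΛ0 1 (-β / (β - 1))
      rw [Real.rpow_one] at this
      rw [← this]
      congr 1
      field_simp
      ring
    rw [h1, h2]
  · intro ζ hζ y hy
    exact core f (fun _ => 0) F Finv ζ y hf_cont hpos (fun _ _ => le_rfl) hF hF_top hF_anti hFinv
      hFinv_to0 hζ hy hM β hβ hfRV 0 le_rfl (by simp) 1 le_rfl (by simp)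
end
end
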